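/- Let V : ℝ^d → ℝ be smooth and J : ℝ^d → M_d(ℝ) be a smooth map with antisymmetric values, J(x)ᵀ = −J(x) for all x. Define the vector fields b := J∇V (i.e. b(x) = J(x)·∇V(x)) and ν := (Σ_{i=1}^d ∂_i J_{ij})_{j=1,…,d}. Then for every h > 0 and every smooth function u : ℝ^d → ℝ, −hΔu + ⟨∇V, ∇u⟩ + ⟨b + hν, ∇u⟩ = −h·e^{V/h}·div(e^{−V/h}·(I_d − J)·∇u) everywhere on ℝ^d; that is, the generator L_{V,b,ν} has the supersymmetric form −h e^{V/h} div ∘ (e^{−V/h}(I_d − J)∇). -/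

import Mathlib

/-!
Expanding the right-hand side by the product rule, the exponential weight cancels against `e^{V/h}`
and, with `H_{ij} = ∂_i ∂_j u`, there remains
`⟨∇V, ∇u⟩ - Σ ∂_iV J_{ij} ∂_ju - hΔu + h Σ ∂_iJ_{ij} ∂_ju + h Σ J_{ij} H_{ij}`.
Antisymmetry of `J` is used twice: it turns the second term into `⟨J∇V, ∇u⟩`, and it makes the last
term vanish because `H` is symmetric (`sum_skew_mul_symm`). The fourth term is `h⟨ν, ∇u⟩`.
The product rule is `pdR_weighted_flux`; the symmetry of `H` is `pdR_comm`.
-/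

open Matrix

/-- Partial derivative `∂_i f` of a real-valued function on `ℝ^d`. -/
noncomputable def pdR {d : ℕ} (f : (Fin d → ℝ) → ℝ) (i : Fin d) : (Fin d → ℝ) → ℝ :=
  fun x => fderiv ℝ f x (Pi.single i 1)

/-- Euclidean gradient `∇V` of a real-valued function. -/
noncomputable def gradV {d : ℕ} (V : (Fin d → ℝ) → ℝ) (x : Fin d → ℝ) : Fin d → ℝ :=
  fun i => pdR V i x

/-- Laplacian of a real-valued function. -/
noncomputable def lapR {d : ℕ} (f : (Fin d → ℝ) → ℝ) : (Fin d → ℝ) → ℝ :=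
  fun x => ∑ i, pdR (pdR f i) i x

/-- Euclidean divergence of a vector field on `ℝ^d`. -/
noncomputable def divg {d : ℕ} (w : (Fin d → ℝ) → Fin d → ℝ) : (Fin d → ℝ) → ℝ :=
  fun x => ∑ i, pdR (fun y => w y i) i x

lemma contDiff_pdR {d : ℕ} {u : (Fin d → ℝ) → ℝ} (hu : ContDiff ℝ (⊤ : ℕ∞) u) (i : Fin d) :
    ContDiff ℝ (⊤ : ℕ∞) (pdR u i) :=
  (hu.fderiv_right (m := (⊤ : ℕ∞)) (by simp)).clm_apply contDiff_const

lemma pdR_comm {d : ℕ} {u : (Fin d → ℝ) → ℝ} (hu : ContDiff ℝ (⊤ : ℕ∞) u) (i j : Fin d)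
    (x : Fin d → ℝ) : pdR (pdR u j) i x = pdR (pdR u i) j x := by
  have hd : DifferentiableAt ℝ (fderiv ℝ u) x :=
    ((hu.fderiv_right (m := (⊤ : ℕ∞)) (by simp)).differentiable (by simp)) x
  have key : ∀ a b : Fin d, pdR (pdR u b) a x
      = fderiv ℝ (fderiv ℝ u) x (Pi.single a 1) (Pi.single b 1) := by
    intro a b
    have h1 := (hd.hasFDerivAt.clm_apply
      (hasFDerivAt_const (Pi.single b (1 : ℝ) : Fin d → ℝ) x)).fderiv
    change fderiv ℝ (fun y => fderiv ℝ u y (Pi.single b 1)) x (Pi.single a 1) = _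
    rw [h1]
    simp
  rw [key, key]
  have hs : IsSymmSndFDerivAt ℝ u x :=
    hu.contDiffAt.isSymmSndFDerivAt (by
      rw [minSmoothness_of_isRCLikeNormedField]
      exact WithTop.coe_le_coe.2 (le_top : (2 : ℕ∞) ≤ ⊤))
  exact hs _ _

lemma sum_skew_mul_symm {d : ℕ} (A H : Fin d → Fin d → ℝ) (hA : ∀ i j, A j i = -A i j)
    (hH : ∀ i j, H i j = H j i) : ∑ i, ∑ j, A i j * H i j = 0 := by
  have h1 : ∑ i, ∑ j, A i j * H i j = -∑ i, ∑ j, A i j * H i j := by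
    conv_lhs => rw [Finset.sum_comm]
    simp only [← Finset.sum_neg_distrib]
    refine Finset.sum_congr rfl fun i _ => Finset.sum_congr rfl fun j _ => ?_
    rw [hA i j, hH j i]
    ring
  linarith

/-- Product rule for the `i`-th partial derivative of the `i`-th component of
`e^{-V/h}(I_d - J)∇u`. -/
lemma pdR_weighted_flux {d : ℕ} {V u : (Fin d → ℝ) → ℝ} (hV : ContDiff ℝ (⊤ : ℕ∞) V)
    (hu : ContDiff ℝ (⊤ : ℕ∞) u) {J : (Fin d → ℝ) → Matrix (Fin d) (Fin d) ℝ}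
    (hJ : ∀ i j, ContDiff ℝ (⊤ : ℕ∞) (fun x => J x i j)) (h : ℝ) (i : Fin d) (x : Fin d → ℝ) :
    pdR (fun y => Real.exp (-V y / h) *
        (((1 : Matrix (Fin d) (Fin d) ℝ) - J y).mulVec (fun j => pdR u j y) i)) i x
      = Real.exp (-V x / h) *
        (-(pdR V i x / h) * (pdR u i x - ∑ j, J x i j * pdR u j x)
          + (pdR (pdR u i) i x
            - ∑ j, (pdR (fun y => J y i j) i x * pdR u j x
                + J x i j * pdR (pdR u j) i x))) := by
  have dV : HasFDerivAt V (fderiv ℝ V x) x := (hV.differentiable (by simp) x).hasFDerivAt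
  have dU : ∀ j, HasFDerivAt (pdR u j) (fderiv ℝ (pdR u j) x) x := fun j =>
    ((contDiff_pdR hu j).differentiable (by simp) x).hasFDerivAt
  have dJ : ∀ j, HasFDerivAt (fun y => J y i j) (fderiv ℝ (fun y => J y i j) x) x := fun j =>
    ((hJ i j).differentiable (by simp) x).hasFDerivAt
  have dE := ((dV.neg).mul_const h⁻¹).exp
  have dS := (dU i).sub (HasFDerivAt.fun_sum (u := Finset.univ) fun j _ => (dJ j).mul (dU j))
  have hf : (fun y => Real.exp (-V y / h) *
        (((1 : Matrix (Fin d) (Fin d) ℝ) - J y).mulVec (fun j => pdR u j y) i))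
      = fun y => Real.exp (-V y * h⁻¹) * (pdR u i y - ∑ j, J y i j * pdR u j y) := by
    funext y
    rw [Matrix.sub_mulVec, Matrix.one_mulVec, Pi.sub_apply, div_eq_mul_inv]
    rfl
  have hD := (dE.mul dS).fderiv
  rw [hf]
  have : ∀ g : (Fin d → ℝ) → ℝ, pdR g i x = fderiv ℝ g x (Pi.single i 1) := fun _ => rfl
  rw [this]
  refine (congrArg (fun L : (Fin d → ℝ) →L[ℝ] ℝ => L (Pi.single i 1)) hD).trans ?_
  have hs : ∑ j, (J x i j * pdR (pdR u j) i x + pdR u j x * pdR (fun y => J y i j) i x)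
      = ∑ j, (pdR (fun y => J y i j) i x * pdR u j x + J x i j * pdR (pdR u j) i x) :=
    Finset.sum_congr rfl fun j _ => by ring
  simp only [_root_.add_apply, _root_.smul_apply, _root_.sub_apply, _root_.neg_apply,
    _root_.sum_apply, smul_eq_mul, Pi.neg_apply, Pi.sub_apply, Pi.mul_apply, ← this, hs]
  rw [div_eq_mul_inv, div_eq_mul_inv]
  ring

/-- Supersymmetric structure of the generator: if `J` is a smooth antisymmetric
matrix-valued map, `b = J∇V` and `ν_j = Σ_i ∂_i J_{ij}`, then
`L_{V,b,ν} u = −h e^{V/h} div(e^{−V/h}(I_d − J)∇u)`. -/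
theorem generator_supersymmetric_form
    (d : ℕ) (hd : 1 ≤ d)
    (V : (Fin d → ℝ) → ℝ) (hV : ContDiff ℝ (⊤ : ℕ∞) V)
    (J : (Fin d → ℝ) → Matrix (Fin d) (Fin d) ℝ)
    (hJ : ∀ i j, ContDiff ℝ (⊤ : ℕ∞) (fun x => J x i j))
    (hJanti : ∀ x, (J x)ᵀ = -(J x)) :
    ∀ h : ℝ, 0 < h →
    ∀ u : (Fin d → ℝ) → ℝ, ContDiff ℝ (⊤ : ℕ∞) u →
    ∀ x : Fin d → ℝ,
      -h * lapR u x + (∑ i, gradV V x i * pdR u i x)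
        + ∑ i, ((J x).mulVec (gradV V x) i
            + h * ∑ k, pdR (fun y => J y k i) k x) * pdR u i x
      = -h * Real.exp (V x / h) *
          divg (fun y i => Real.exp (-V y / h) *
            (((1 : Matrix (Fin d) (Fin d) ℝ) - J y).mulVec (fun j => pdR u j y) i)) x := by
  intro h hh u hu x
  have hA : ∀ i j, J x j i = -J x i j := fun i j => congrFun (congrFun (hJanti x) i) j
  have hz := sum_skew_mul_symm (fun i j => J x i j) (fun i j => pdR (pdR u j) i x) hA
    (fun i j => pdR_comm hu i j x)
  have hb : ∑ i, pdR V i x * ∑ j, J x i j * pdR u j x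
      = -∑ i, (∑ j, J x i j * pdR V j x) * pdR u i x := by
    simp only [Finset.mul_sum, Finset.sum_mul, ← Finset.sum_neg_distrib]
    rw [Finset.sum_comm]
    refine Finset.sum_congr rfl fun i _ => Finset.sum_congr rfl fun j _ => ?_
    rw [hA i j]
    ring
  have hν : ∑ i, (∑ k, pdR (fun y => J y k i) k x) * pdR u i x
      = ∑ i, ∑ j, pdR (fun y => J y i j) i x * pdR u j x := by
    simp only [Finset.sum_mul]
    exact Finset.sum_comm
  have hexp : Real.exp (V x / h) * Real.exp (-V x / h) = 1 := by
    rw [← Real.exp_add, ← add_div]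
    simp
  have hR : divg (fun y i => Real.exp (-V y / h) *
        (((1 : Matrix (Fin d) (Fin d) ℝ) - J y).mulVec (fun j => pdR u j y) i)) x
      = Real.exp (-V x / h) *
        (-(1 / h) * (∑ i, pdR V i x * pdR u i x - ∑ i, pdR V i x * ∑ j, J x i j * pdR u j x)
          + (∑ i, pdR (pdR u i) i x
            - (∑ i, ∑ j, pdR (fun y => J y i j) i x * pdR u j x
                + ∑ i, ∑ j, J x i j * pdR (pdR u j) i x))) := by
    simp only [divg, pdR_weighted_flux hV hu hJ, ← Finset.sum_add_distrib,
      ← Finset.sum_sub_distrib, ← Finset.mul_sum]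
    congr 1
    rw [Finset.mul_sum, ← Finset.sum_add_distrib]
    refine Finset.sum_congr rfl fun i _ => ?_
    ring
  have hL : ∑ i, ((J x).mulVec (gradV V x) i
            + h * ∑ k, pdR (fun y => J y k i) k x) * pdR u i x
      = ∑ i, (∑ j, J x i j * pdR V j x) * pdR u i x
        + h * ∑ i, (∑ k, pdR (fun y => J y k i) k x) * pdR u i x := by
    rw [Finset.mul_sum, ← Finset.sum_add_distrib]
    refine Finset.sum_congr rfl fun i _ => ?_
    simp only [Matrix.mulVec, dotProduct, gradV]
    ring
  rw [hR, hL, hb, hz, hν]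
  simp only [lapR, gradV]
  rw [← mul_assoc, mul_assoc (-h), hexp]
  field_simp
  ring
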